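/- (Correctness of the Threshold Decay framework.) Let ε ∈ (0,1), let T ≥ 10 be an integer, U ≥ 2, let L be an n×n invertible RDDL matrix with integer entries in [−U, U], and let b be a nonnegative vector with integer entries in [0, U]. Set ε_L := ε/(64·T·(nU)²). Suppose subsets S^(0) ⊇ S^(1) ⊇ ⋯ ⊇ S^(T) of [n] and vectors x̂^(t) (indexed by S^(t)), b̂^(t) (indexed by S^(t), nonnegative), x̃^(t) (indexed by [n]\S^(t)) satisfy: S^(0) = [n], b̂^(0) = b, and for each 0 ≤ t < T: (i) ‖x̂^(t) − (L_{S^(t),S^(t)})^{-1} b̂^(t)‖₂ ≤ ε_L·‖b̂^(t)‖₂; (ii) θ_t is the smallest power of two strictly larger than ‖b̂^(t)‖₁/(4(nU)²); (iii) F^(t) = { i ∈ S^(t) : x̂^(t)_i ≥ θ_t } and S^(t+1) = S^(t) \ F^(t); (iv) x̃^(t+1) agrees with x̃^(t) on [n]\S^(t) and with x̂^(t) on F^(t); (v) b̂^(t+1) ≈_{ε/(8T)} b_{S^(t+1)} − L_{S^(t+1), [n]\S^(t+1)} x̃^(t+1) entrywise. Let A := [n] \ S^(T) and let x̃ ∈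 ℝ^n equal x̃^(T) on A and 0 on S^(T). Then: (a) every index i with (L^{-1}b)_i ≥ (nU)^{-(T+1)}·‖b‖₁ belongs to A; (b) x̃_A ≈_ε (L^{-1}b)_A entrywise; (c) if moreover T = n, then x̃ ≈_ε L^{-1}b entrywise (the entries of L^{-1}b outside A being exactly zero). -/

import Mathlib

open Matrix

/-- A matrix `M` (over any finite index type) is an RDDL matrix. -/
def IsRDDL {ι : Type*} [Fintype ι] [DecidableEq ι] (M : Matrix ι ι ℝ) : Prop :=
  (∀ i, 0 < M i i) ∧ (∀ i j, i ≠ j → M i j ≤ 0) ∧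
    (∀ i, ∑ j ∈ Finset.univ.erase i, |M i j| ≤ M i i)

/-- The submatrix `M_{S,T}` of `M` with rows indexed by `S` and columns indexed by `T`. -/
def submatrixOn {n : ℕ} (M : Matrix (Fin n) (Fin n) ℝ) (S T : Finset (Fin n)) :
    Matrix {i // i ∈ S} {j // j ∈ T} ℝ :=
  Matrix.of fun i j => M i.val j.val

/-- `a ≈_ε b` : `e^{-ε}·a ≤ b ≤ e^{ε}·a`. -/
def EApprox (ε a b : ℝ) : Prop := Real.exp (-ε) * a ≤ b ∧ b ≤ Real.exp ε * a

/-! An invertible row diagonally dominant L-matrix is a nonsingular M-matrix: its inverse is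
entrywise nonnegative, so a relative error in a right-hand side passes unchanged to the solution.
Since `x = L⁻¹ b` solves every reduced system with right-hand side `b - L x` over the removed
indices, an output of relative error `2 t δ` gives right-hand sides, hence reduced solutions, of
relative error `(2 t + 1) δ`; the entries extracted in round `t` lie above the threshold, so the
solver adds at most another `δ`.

Let `B` be the `ℓ₁` norm of the current right-hand side and `N ≥ trace L` (in the paper, `n U`).
The indices that are not extracted satisfy `x i ≤ 11/16 * B / N²`. The column sums of a Z-matrix
are at most its diagonal entries, so the exact next right-hand side has `ℓ₁` norm at most
`11/16 * B / N`: the norm drops by a factor `N` per round, which bounds the entries never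
extracted. The same estimate shows that every round extracts some index: otherwise it would apply
to the current right-hand side itself and bound `B` by a proper fraction of `B`. -/

section MMatrix

variable {ι κ 𝕜 : Type*}

/-- `M` is a *Z-matrix*: its off-diagonal entries are nonpositive. -/
def IsZMatrix [Zero 𝕜] [LE 𝕜] (M : Matrix ι ι 𝕜) : Prop :=
  Pairwise fun i j => M i j ≤ 0

/-- `M` is a nonsingular *M-matrix*: an invertible Z-matrix with entrywise nonnegative inverse. -/
structure IsMMatrix [Fintype ι] [DecidableEq ι] [CommRing 𝕜] [LE 𝕜] (M : Matrix ι ι 𝕜) :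
    Prop where
  isZMatrix : IsZMatrix M
  isUnit : IsUnit M
  inv_nonneg : ∀ i j, 0 ≤ M⁻¹ i j

/-- The principal submatrix `M_{s,s}`, with rows and columns indexed by the subtype of `s`. -/
abbrev principalSubmatrix (M : Matrix ι ι 𝕜) (s : Finset ι) : Matrix s s 𝕜 :=
  M.submatrix (↑) (↑)

theorem principalSubmatrix_mulVec [Fintype ι] [DecidableEq ι] [NonUnitalNonAssocRing 𝕜]
    (M : Matrix ι ι 𝕜) (s : Finset ι) (x : ι → 𝕜) (i : s) :
    (principalSubmatrix M s *ᵥ fun j => x j) i = (M *ᵥ x) i - ∑ j ∈ sᶜ, M i j * x j := by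
  rw [mulVec, dotProduct, eq_sub_iff_add_eq]
  simp only [submatrix_apply, Finset.sum_coe_sort s fun j => M i j * x j]
  exact Finset.sum_add_sum_compl s _

theorem mulVec_inv_mulVec_of_isUnit [Fintype ι] [DecidableEq ι] [CommRing 𝕜] {M : Matrix ι ι 𝕜}
    (hM : IsUnit M) (b : ι → 𝕜) : M *ᵥ (M⁻¹ *ᵥ b) = b := by
  rw [mulVec_mulVec, mul_nonsing_inv _ ((isUnit_iff_isUnit_det M).1 hM), one_mulVec]

theorem trace_le_card_mul [Fintype ι] [Semiring 𝕜] [PartialOrder 𝕜] [IsOrderedRing 𝕜]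
    {M : Matrix ι ι 𝕜} {c : 𝕜} (h : ∀ i, M i i ≤ c) : M.trace ≤ Fintype.card ι * c := by
  simpa [trace] using Finset.sum_le_card_nsmul Finset.univ _ c fun i _ => h i

variable [Fintype ι]

section Ring

variable [CommRing 𝕜] [LinearOrder 𝕜] [IsStrictOrderedRing 𝕜] {M : Matrix ι ι 𝕜}

namespace IsZMatrix

theorem mulVec_le_sum (hM : IsZMatrix M) {x : ι → 𝕜} (hx : 0 ≤ x) {s : Finset ι} {i : ι}
    (hi : i ∈ s) : (M *ᵥ x) i ≤ ∑ j ∈ s, M i j * x j := by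
  classical
  rw [mulVec, dotProduct, ← Finset.sum_add_sum_compl s, add_le_iff_nonpos_right]
  refine Finset.sum_nonpos fun j hj => mul_nonpos_of_nonpos_of_nonneg (hM ?_) (hx j)
  exact ne_of_mem_of_not_mem hi (Finset.mem_compl.1 hj)

theorem sum_mulVec_le_trace_mul (hM : IsZMatrix M) (hdiag : ∀ i, 0 ≤ M i i) {x : ι → 𝕜}
    (hx : 0 ≤ x) {m : 𝕜} (hxm : ∀ i, x i ≤ m) : ∑ i, (M *ᵥ x) i ≤ M.trace * m := by
  classical
  have hcol (j : ι) : ∑ i, M i j * x j ≤ M j j * m := by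
    rw [← Finset.add_sum_erase _ _ (Finset.mem_univ j)]
    refine add_le_of_le_of_nonpos (mul_le_mul_of_nonneg_left (hxm j) (hdiag j)) ?_
    exact Finset.sum_nonpos fun i hi =>
      mul_nonpos_of_nonpos_of_nonneg (hM (Finset.ne_of_mem_erase hi)) (hx j)
  simp only [mulVec, dotProduct, trace, diag_apply, Finset.sum_mul]
  rw [Finset.sum_comm]
  exact Finset.sum_le_sum fun j _ => hcol j

end IsZMatrix

namespace IsMMatrix

variable [DecidableEq ι]

theorem inv_mulVec_nonneg (hM : IsMMatrix M) {b : ι → 𝕜} (hb : 0 ≤ b) : 0 ≤ M⁻¹ *ᵥ b :=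
  fun i => dotProduct_nonneg_of_nonneg (hM.inv_nonneg i) hb

theorem le_of_mulVec_le (hM : IsMMatrix M) {x y : ι → 𝕜} (h : M *ᵥ x ≤ M *ᵥ y) : x ≤ y := by
  have hsub := hM.inv_mulVec_nonneg (sub_nonneg.2 h)
  rwa [← mulVec_sub, mulVec_mulVec, nonsing_inv_mul _ ((isUnit_iff_isUnit_det M).1 hM.isUnit),
    one_mulVec, sub_nonneg] at hsub

theorem one_le_diag_mul_inv_mulVec_one (hM : IsMMatrix M) (i : ι) :
    1 ≤ M i i * (M⁻¹ *ᵥ 1) i := by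
  simpa [mulVec_inv_mulVec_of_isUnit hM.isUnit] using
    hM.isZMatrix.mulVec_le_sum (hM.inv_mulVec_nonneg zero_le_one) (Finset.mem_singleton_self i)

theorem inv_mulVec_one_pos (hM : IsMMatrix M) (i : ι) : 0 < (M⁻¹ *ᵥ 1) i := by
  refine (hM.inv_mulVec_nonneg zero_le_one i).lt_of_ne fun h => ?_
  have := hM.one_le_diag_mul_inv_mulVec_one i
  simp [← h] at this
  exact this.not_gt one_pos

theorem diag_pos (hM : IsMMatrix M) (i : ι) : 0 < M i i :=
  pos_of_mul_pos_left (one_pos.trans_le (hM.one_le_diag_mul_inv_mulVec_one i))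
    (hM.inv_mulVec_one_pos i).le

theorem trace_principalSubmatrix_le (hM : IsMMatrix M) (s : Finset ι) :
    (principalSubmatrix M s).trace ≤ M.trace := by
  rw [trace, trace]
  simp only [diag_apply, submatrix_apply, Finset.sum_coe_sort s fun i => M i i]
  exact Finset.sum_le_univ_sum_of_nonneg fun i => (hM.diag_pos i).le

theorem principalSubmatrix_mulVec_nonneg (hM : IsMMatrix M) {x : ι → 𝕜} (hx : 0 ≤ x)
    (hMx : 0 ≤ M *ᵥ x) (s : Finset ι) : 0 ≤ principalSubmatrix M s *ᵥ fun j => x j := by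
  intro i
  have := hM.isZMatrix.mulVec_le_sum hx i.2
  rw [← Finset.sum_coe_sort] at this
  exact (hMx i).trans this

end IsMMatrix

end Ring

section Field

variable [Field 𝕜] [LinearOrder 𝕜] [IsStrictOrderedRing 𝕜] {M : Matrix ι ι 𝕜}

/-- Compare `y` with its best lower bound `c • w`: at an index minimising `y i / w i` the
off-diagonal signs give `(M *ᵥ y) i ≤ c * (M *ᵥ w) i`, so `c` cannot be negative. -/
theorem IsZMatrix.nonneg_of_mulVec_nonneg (hM : IsZMatrix M) {w y : ι → 𝕜} (hw : ∀ i, 0 < w i)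
    (hMw : ∀ i, 0 < (M *ᵥ w) i) (hy : 0 ≤ M *ᵥ y) : 0 ≤ y := by
  intro k
  obtain ⟨i, -, hmin⟩ := Finset.univ.exists_min_image (fun i => y i / w i) ⟨k, Finset.mem_univ k⟩
  have hterm (j : ι) : M i j * y j ≤ y i / w i * (M i j * w j) := by
    obtain rfl | hij := eq_or_ne i j
    · rw [mul_left_comm, div_mul_cancel₀ _ (hw i).ne']
    · rw [mul_left_comm]
      exact mul_le_mul_of_nonpos_left ((le_div_iff₀ (hw j)).1 (hmin j (Finset.mem_univ j))) (hM hij)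
  have hMy : (M *ᵥ y) i ≤ y i / w i * (M *ᵥ w) i := by
    simpa only [mulVec, dotProduct, Finset.mul_sum] using Finset.sum_le_sum fun j _ => hterm j
  have hmin_nonneg : 0 ≤ y i / w i := nonneg_of_mul_nonneg_left ((hy i).trans hMy) (hMw i)
  simpa using (le_div_iff₀ (hw k)).1 (hmin_nonneg.trans (hmin k (Finset.mem_univ k)))

theorem IsZMatrix.isMMatrix_of_mulVec_pos [DecidableEq ι] (hM : IsZMatrix M) {w : ι → 𝕜}
    (hw : ∀ i, 0 < w i) (hMw : ∀ i, 0 < (M *ᵥ w) i) : IsMMatrix M := by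
  have hunit : IsUnit M := by
    refine mulVec_injective_iff_isUnit.1 fun y z hyz => le_antisymm ?_ ?_ <;>
      refine sub_nonneg.1 (hM.nonneg_of_mulVec_nonneg hw hMw ?_) <;>
      rw [mulVec_sub, hyz, sub_self]
  refine ⟨hM, hunit, fun i k => ?_⟩
  have hcol : M *ᵥ M⁻¹.col k = Pi.single k 1 := by
    rw [← mulVec_single_one, mulVec_mulVec, mul_nonsing_inv _ ((isUnit_iff_isUnit_det M).1 hunit),
      one_mulVec]
  exact hM.nonneg_of_mulVec_nonneg hw hMw (hcol ▸ Pi.single_nonneg.2 zero_le_one) i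

theorem IsMMatrix.submatrix [DecidableEq ι] [Fintype κ] [DecidableEq κ] (hM : IsMMatrix M)
    {f : κ → ι} (hf : Function.Injective f) : IsMMatrix (M.submatrix f f) := by
  have hZ : IsZMatrix (M.submatrix f f) := fun _ _ hkl => hM.isZMatrix (hf.ne hkl)
  refine hZ.isMMatrix_of_mulVec_pos (w := (M⁻¹ *ᵥ 1) ∘ f) (fun k => hM.inv_mulVec_one_pos _)
    fun k => ?_
  calc (0 : 𝕜) < (M *ᵥ (M⁻¹ *ᵥ 1)) (f k) := by simp [mulVec_inv_mulVec_of_isUnit hM.isUnit]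
    _ ≤ ∑ j ∈ Finset.univ.image f, M (f k) j * (M⁻¹ *ᵥ 1) j :=
      hM.isZMatrix.mulVec_le_sum (hM.inv_mulVec_nonneg zero_le_one)
        (Finset.mem_image_of_mem f (Finset.mem_univ k))
    _ = (M.submatrix f f *ᵥ ((M⁻¹ *ᵥ 1) ∘ f)) k := Finset.sum_image hf.injOn

theorem IsMMatrix.principalSubmatrix [DecidableEq ι] (hM : IsMMatrix M) (s : Finset ι) :
    IsMMatrix (principalSubmatrix M s) :=
  hM.submatrix Subtype.val_injective

end Field

end MMatrix

section RDDL

variable {ι : Type*} [Fintype ι] [DecidableEq ι] {M : Matrix ι ι ℝ}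

theorem IsRDDL.isZMatrix (hM : IsRDDL M) : IsZMatrix M := fun i j => hM.2.1 i j

theorem IsRDDL.row_sum_nonneg (hM : IsRDDL M) (i : ι) : 0 ≤ ∑ j, M i j := by
  have hoff : ∑ j ∈ Finset.univ.erase i, |M i j| = -∑ j ∈ Finset.univ.erase i, M i j := by
    rw [← Finset.sum_neg_distrib]
    exact Finset.sum_congr rfl fun j hj =>
      abs_of_nonpos (hM.isZMatrix (Finset.ne_of_mem_erase hj).symm)
  rw [← Finset.add_sum_erase _ _ (Finset.mem_univ i)]
  linarith [hM.2.2 i]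

theorem IsRDDL.isMMatrix_add_smul_one (hM : IsRDDL M) {η : ℝ} (hη : 0 < η) :
    IsMMatrix (M + η • (1 : Matrix ι ι ℝ)) := by
  refine IsZMatrix.isMMatrix_of_mulVec_pos (w := 1) (fun i j hij => ?_) (fun _ => one_pos)
    fun i => ?_
  · simpa [one_apply_ne hij] using hM.isZMatrix hij
  · rw [add_mulVec, smul_mulVec, one_mulVec]
    simpa [mulVec, dotProduct] using add_pos_of_nonneg_of_pos (hM.row_sum_nonneg i) hη

/-- The perturbed matrices `M + η • 1` are strictly diagonally dominant; let `η → 0⁺`. -/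
theorem IsRDDL.isMMatrix (hM : IsRDDL M) (hunit : IsUnit M) : IsMMatrix M := by
  refine ⟨hM.isZMatrix, hunit, fun i k => ?_⟩
  have hdet : M.det ≠ 0 := ((isUnit_iff_isUnit_det M).1 hunit).ne_zero
  have hinv : ContinuousAt Inv.inv M :=
    continuousAt_matrix_inv M (by simpa using continuousAt_inv₀ hdet)
  have hpert : Filter.Tendsto (fun η : ℝ => M + η • (1 : Matrix ι ι ℝ))
      (nhdsWithin 0 (Set.Ioi 0)) (nhds M) := by
    have hcont : Continuous fun η : ℝ => M + η • (1 : Matrix ι ι ℝ) := by fun_prop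
    simpa using (hcont.tendsto 0).mono_left nhdsWithin_le_nhds
  have hlim := ((continuous_id.matrix_elem i k).tendsto M⁻¹).comp (hinv.tendsto.comp hpert)
  exact ge_of_tendsto hlim (Filter.eventually_of_mem self_mem_nhdsWithin fun η hη =>
    (hM.isMMatrix_add_smul_one hη).inv_nonneg i k)

end RDDL

namespace EApprox

variable {e f a b c a' b' : ℝ}

theorem refl (he : 0 ≤ e) (ha : 0 ≤ a) : EApprox e a a :=
  ⟨mul_le_of_le_one_left ha (Real.exp_le_one_iff.2 (neg_nonpos.2 he)),
    le_mul_of_one_le_left ha (Real.one_le_exp he)⟩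

theorem symm (h : EApprox e a b) : EApprox e b a := by
  refine ⟨?_, ?_⟩
  · rw [Real.exp_neg, inv_mul_le_iff₀ (Real.exp_pos e)]
    exact h.2
  · rw [← inv_mul_le_iff₀ (Real.exp_pos e), ← Real.exp_neg]
    exact h.1

theorem trans (hab : EApprox e a b) (hbc : EApprox f b c) : EApprox (e + f) a c := by
  refine ⟨?_, ?_⟩
  · calc Real.exp (-(e + f)) * a = Real.exp (-f) * (Real.exp (-e) * a) := by
          rw [neg_add_rev, Real.exp_add, mul_assoc]
      _ ≤ Real.exp (-f) * b := by gcongr; exact hab.1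
      _ ≤ c := hbc.1
  · calc c ≤ Real.exp f * b := hbc.2
      _ ≤ Real.exp f * (Real.exp e * a) := by gcongr; exact hab.2
      _ = Real.exp (e + f) * a := by rw [add_comm, Real.exp_add, mul_assoc]

theorem nonneg_right (h : EApprox e a b) (ha : 0 ≤ a) : 0 ≤ b :=
  (mul_nonneg (Real.exp_pos _).le ha).trans h.1

theorem nonneg_left (h : EApprox e a b) (hb : 0 ≤ b) : 0 ≤ a :=
  h.symm.nonneg_right hb

theorem mono (h : EApprox e a b) (ha : 0 ≤ a) (hef : e ≤ f) : EApprox f a b := by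
  refine ⟨le_trans ?_ h.1, h.2.trans ?_⟩ <;> gcongr

theorem add (h : EApprox e a b) (h' : EApprox e a' b') : EApprox e (a + a') (b + b') :=
  ⟨(mul_add _ _ _).trans_le (add_le_add h.1 h'.1),
    (add_le_add h.2 h'.2).trans_eq (mul_add _ _ _).symm⟩

theorem const_mul (h : EApprox e a b) (hc : 0 ≤ c) : EApprox e (c * a) (c * b) := by
  unfold EApprox
  rw [mul_left_comm, mul_left_comm (Real.exp e)]
  exact ⟨mul_le_mul_of_nonneg_left h.1 hc, mul_le_mul_of_nonneg_left h.2 hc⟩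

theorem sum {ι : Type*} {s : Finset ι} {u v : ι → ℝ} (h : ∀ i ∈ s, EApprox e (u i) (v i)) :
    EApprox e (∑ i ∈ s, u i) (∑ i ∈ s, v i) := by
  unfold EApprox
  rw [Finset.mul_sum, Finset.mul_sum]
  exact ⟨Finset.sum_le_sum fun i hi => (h i hi).1, Finset.sum_le_sum fun i hi => (h i hi).2⟩

theorem of_abs_sub_le (he : 0 ≤ e) (he1 : e ≤ 1) (ha : 0 ≤ a) (h : |a - b| ≤ e / 2 * a) :
    EApprox e a b := by
  obtain ⟨hlow, hupp⟩ := abs_le.1 h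
  have hexp_neg : Real.exp (-e) ≤ 1 - e / 2 := by
    rw [Real.exp_neg]
    refine (inv_anti₀ (by linarith) (Real.add_one_le_exp e)).trans ?_
    rw [inv_le_iff_one_le_mul₀ (by linarith)]
    nlinarith
  have hexp : 1 + e / 2 ≤ Real.exp e := by linarith [Real.add_one_le_exp e]
  refine ⟨(mul_le_mul_of_nonneg_right hexp_neg ha).trans ?_,
    le_trans ?_ (mul_le_mul_of_nonneg_right hexp ha)⟩ <;> linarith

theorem le_four_thirds_mul (h : EApprox e a b) (ha : 0 ≤ a) (he : e ≤ 1 / 4) : b ≤ 4 / 3 * a := by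
  refine h.2.trans (mul_le_mul_of_nonneg_right ((Real.exp_le_exp.2 he).trans ?_) ha)
  exact (Real.exp_bound_div_one_sub_of_interval (by norm_num) (by norm_num)).trans (by norm_num)

end EApprox

section EApprox

variable {ι : Type*} [Fintype ι] [DecidableEq ι] {M : Matrix ι ι ℝ} {e : ℝ}

theorem IsMMatrix.eApprox_of_mulVec (hM : IsMMatrix M) {x y : ι → ℝ}
    (h : ∀ i, EApprox e ((M *ᵥ x) i) ((M *ᵥ y) i)) (i : ι) : EApprox e (x i) (y i) := by
  have hlow : Real.exp (-e) • x ≤ y := hM.le_of_mulVec_le <| by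
    rw [mulVec_smul]
    exact fun i => (h i).1
  have hupp : y ≤ Real.exp e • x := hM.le_of_mulVec_le <| by
    rw [mulVec_smul]
    exact fun i => (h i).2
  exact ⟨hlow i, hupp i⟩

theorem IsZMatrix.eApprox_sub_sum_compl (hM : IsZMatrix M) {s : Finset ι} {x y : ι → ℝ} {i : ι}
    {c : ℝ} (he : 0 ≤ e) (hc : 0 ≤ c) (hi : i ∈ s) (h : ∀ j ∉ s, EApprox e (x j) (y j)) :
    EApprox e (c - ∑ j ∈ sᶜ, M i j * x j) (c - ∑ j ∈ sᶜ, M i j * y j) := by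
  simp only [sub_eq_add_neg, ← Finset.sum_neg_distrib, ← neg_mul]
  refine (EApprox.refl he hc).add (EApprox.sum fun j hj => ?_)
  have hj : j ∉ s := Finset.mem_compl.1 hj
  exact (h j hj).const_mul (neg_nonneg.2 (hM (ne_of_mem_of_not_mem hi hj)))

end EApprox

theorem abs_le_mul_sum_abs_of_sqrt_sum_sq_le {ι κ : Type*} [Fintype ι] {s : Finset κ} {v : ι → ℝ}
    {c : κ → ℝ} {r : ℝ} (hr : 0 ≤ r) (h : √(∑ i, v i ^ 2) ≤ r * √(∑ j ∈ s, c j ^ 2)) (i : ι) :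
    |v i| ≤ r * ∑ j ∈ s, |c j| := by
  have hl2_le_l1 : √(∑ j ∈ s, c j ^ 2) ≤ ∑ j ∈ s, |c j| := by
    refine Real.sqrt_le_iff.2 ⟨Finset.sum_nonneg fun _ _ => abs_nonneg _, ?_⟩
    simpa only [sq_abs] using
      Finset.sum_sq_le_sq_sum_of_nonneg fun j (_ : j ∈ s) => abs_nonneg (c j)
  calc |v i| ≤ √(∑ i, v i ^ 2) := Real.abs_le_sqrt <|
        Finset.single_le_sum (f := fun i => v i ^ 2) (fun _ _ => sq_nonneg _) (Finset.mem_univ i)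
    _ ≤ r * √(∑ j ∈ s, c j ^ 2) := h
    _ ≤ r * ∑ j ∈ s, |c j| := by gcongr

theorem two_zpow_le_two_mul {q : ℝ} {z : ℤ} (h : (2 : ℝ) ^ (z - 1) ≤ q) :
    (2 : ℝ) ^ z ≤ 2 * q := by
  rw [zpow_sub_one₀ two_ne_zero] at h
  linarith

section Run

variable {ι : Type*} [Fintype ι] [DecidableEq ι]

/-- The exact solution of the reduced system on `s` with right-hand side `c`. -/
noncomputable def reducedSolution (L : Matrix ι ι ℝ) (s : Finset ι) (c : ι → ℝ) : s → ℝ :=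
  (principalSubmatrix L s)⁻¹ *ᵥ fun j => c j

theorem IsMMatrix.principalSubmatrix_mulVec_reducedSolution {L : Matrix ι ι ℝ} (hL : IsMMatrix L)
    (s : Finset ι) (c : ι → ℝ) :
    _root_.principalSubmatrix L s *ᵥ reducedSolution L s c = fun j : s => c j :=
  mulVec_inv_mulVec_of_isUnit (hL.principalSubmatrix s).isUnit _

/-- A run of `T` rounds of the Threshold Decay framework on the system `L x = b`: in round `t` the
reduced system on `S t` with right-hand side `bhat t` is solved approximately by `xhat t`, and the
entries of at least `θ t` are moved to the output `xtil (t + 1)`. The number `N` is the scale that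
sets thresholds and solver accuracy (`n U` in the paper, where `n = card ι` and `U` bounds the
entries of `L`), and `δ` is the relative error allowed per round (`ε / (8 T)` in the paper). The
solver error is only constrained entrywise, and `θ t` need not be a power of two. -/
structure IsThresholdDecayRun (L : Matrix ι ι ℝ) (b : ι → ℝ) (N δ : ℝ) (T : ℕ)
    (S : ℕ → Finset ι) (xhat bhat xtil : ℕ → ι → ℝ) (θ : ℕ → ℝ) : Prop where
  support_zero : S 0 = Finset.univ
  rhs_zero : bhat 0 = b
  abs_sub_solution_le : ∀ t < T, ∀ i : S t,
    |xhat t i - reducedSolution L (S t) (bhat t) i| ≤ δ / (8 * N ^ 2) * ∑ j ∈ S t, |bhat t j|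
  threshold_mem : ∀ t < T, θ t ∈ Set.Ioc ((∑ i ∈ S t, |bhat t i|) / (4 * N ^ 2))
    ((∑ i ∈ S t, |bhat t i|) / (2 * N ^ 2))
  mem_support_succ : ∀ t < T, ∀ i, i ∈ S (t + 1) ↔ i ∈ S t ∧ xhat t i < θ t
  output_of_notMem : ∀ t < T, ∀ i ∉ S t, xtil (t + 1) i = xtil t i
  output_of_threshold_le : ∀ t < T, ∀ i ∈ S t, θ t ≤ xhat t i → xtil (t + 1) i = xhat t i
  rhs_succ : ∀ t < T, ∀ i ∈ S (t + 1),
    EApprox δ (bhat (t + 1) i) (b i - ∑ j ∈ (S (t + 1))ᶜ, L i j * xtil (t + 1) j)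

namespace IsThresholdDecayRun

variable {L : Matrix ι ι ℝ} {b : ι → ℝ} {N δ : ℝ} {T t : ℕ} {S : ℕ → Finset ι}
  {xhat bhat xtil : ℕ → ι → ℝ} {θ : ℕ → ℝ}

theorem sum_abs_rhs_pos (h : IsThresholdDecayRun L b N δ T S xhat bhat xtil θ) (ht : t < T) :
    0 < ∑ i ∈ S t, |bhat t i| := by
  obtain ⟨hlow, hupp⟩ := h.threshold_mem t ht
  refine (Finset.sum_nonneg fun _ _ => abs_nonneg _).lt_of_ne fun hzero => ?_
  rw [← hzero, zero_div] at hlow hupp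
  exact hlow.not_ge hupp

theorem threshold_pos (h : IsThresholdDecayRun L b N δ T S xhat bhat xtil θ) (ht : t < T) :
    0 < θ t :=
  (div_nonneg (h.sum_abs_rhs_pos ht).le (by positivity)).trans_lt (h.threshold_mem t ht).1

theorem eApprox_reducedSolution_of_threshold_le
    (h : IsThresholdDecayRun L b N δ T S xhat bhat xtil θ) (hδ : 0 ≤ δ) (hδ1 : δ ≤ 1) (ht : t < T)
    {i : S t} (hi : θ t ≤ xhat t i) :
    EApprox δ (xhat t i) (reducedSolution L (S t) (bhat t) i) := by
  refine .of_abs_sub_le hδ hδ1 ((h.threshold_pos ht).le.trans hi) ?_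
  calc |xhat t i - reducedSolution L (S t) (bhat t) i|
      ≤ δ / (8 * N ^ 2) * ∑ j ∈ S t, |bhat t j| := h.abs_sub_solution_le t ht i
    _ = δ / 2 * ((∑ j ∈ S t, |bhat t j|) / (4 * N ^ 2)) := by ring
    _ ≤ δ / 2 * xhat t i := by
      gcongr
      exact (h.threshold_mem t ht).1.le.trans hi

/-- The error `2 * t * δ` is inherited from the output, the last `δ` is made in forming `bhat t`. -/
theorem eApprox_rhs_of_output (h : IsThresholdDecayRun L b N δ T S xhat bhat xtil θ)
    (hL : IsMMatrix L) (hb : 0 ≤ b) (hδ : 0 ≤ δ) (ht : t ≤ T)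
    (hout : ∀ i ∉ S t, EApprox (2 * t * δ) (xtil t i) ((L⁻¹ *ᵥ b) i)) (i : S t) :
    EApprox ((2 * t + 1) * δ) (bhat t i)
      ((principalSubmatrix L (S t) *ᵥ fun j => (L⁻¹ *ᵥ b) j) i) := by
  rw [principalSubmatrix_mulVec, mulVec_inv_mulVec_of_isUnit hL.isUnit]
  cases t with
  | zero => simpa [h.support_zero, h.rhs_zero] using EApprox.refl hδ (hb i)
  | succ t =>
    have htrans := (h.rhs_succ t ht i i.2).trans
      (hL.isZMatrix.eApprox_sub_sum_compl (by positivity) (hb i) i.2 hout)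
    convert htrans using 1
    ring

theorem eApprox_reducedSolution_of_output (h : IsThresholdDecayRun L b N δ T S xhat bhat xtil θ)
    (hL : IsMMatrix L) (hb : 0 ≤ b) (hδ : 0 ≤ δ) (ht : t ≤ T)
    (hout : ∀ i ∉ S t, EApprox (2 * t * δ) (xtil t i) ((L⁻¹ *ᵥ b) i)) (i : S t) :
    EApprox ((2 * t + 1) * δ) (reducedSolution L (S t) (bhat t) i) ((L⁻¹ *ᵥ b) i) := by
  refine (hL.principalSubmatrix (S t)).eApprox_of_mulVec (y := fun j => (L⁻¹ *ᵥ b) j)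
    (fun j => ?_) i
  rw [hL.principalSubmatrix_mulVec_reducedSolution]
  exact h.eApprox_rhs_of_output hL hb hδ ht hout j

theorem eApprox_output (h : IsThresholdDecayRun L b N δ T S xhat bhat xtil θ)
    (hL : IsMMatrix L) (hb : 0 ≤ b) (hδ : 0 ≤ δ) (hδ1 : δ ≤ 1) (ht : t ≤ T) :
    ∀ i ∉ S t, EApprox (2 * t * δ) (xtil t i) ((L⁻¹ *ᵥ b) i) := by
  induction t with
  | zero => simp [h.support_zero]
  | succ t ih =>
    intro i hi
    have hout := ih (Nat.le_of_succ_le ht)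
    by_cases hit : i ∈ S t
    · have hlarge : θ t ≤ xhat t i := by
        by_contra! hlt
        exact hi ((h.mem_support_succ t ht i).2 ⟨hit, hlt⟩)
      have hsolver :=
        h.eApprox_reducedSolution_of_threshold_le hδ hδ1 ht (i := ⟨i, hit⟩) hlarge
      have htrans := hsolver.trans
        (h.eApprox_reducedSolution_of_output hL hb hδ (Nat.le_of_succ_le ht) hout ⟨i, hit⟩)
      rw [h.output_of_threshold_le t ht i hit hlarge]
      convert htrans using 1
      push_cast
      ring
    · rw [h.output_of_notMem t ht i hit]
      have hx := hL.inv_mulVec_nonneg hb i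
      refine (hout i hit).mono ((hout i hit).nonneg_left hx) ?_
      push_cast
      linarith

theorem eApprox_rhs (h : IsThresholdDecayRun L b N δ T S xhat bhat xtil θ)
    (hL : IsMMatrix L) (hb : 0 ≤ b) (hδ : 0 ≤ δ) (hδ1 : δ ≤ 1) (ht : t ≤ T) (i : S t) :
    EApprox ((2 * t + 1) * δ) (bhat t i)
      ((principalSubmatrix L (S t) *ᵥ fun j => (L⁻¹ *ᵥ b) j) i) :=
  h.eApprox_rhs_of_output hL hb hδ ht (h.eApprox_output hL hb hδ hδ1 ht) i

theorem eApprox_reducedSolution (h : IsThresholdDecayRun L b N δ T S xhat bhat xtil θ)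
    (hL : IsMMatrix L) (hb : 0 ≤ b) (hδ : 0 ≤ δ) (hδ1 : δ ≤ 1) (ht : t ≤ T) (i : S t) :
    EApprox ((2 * t + 1) * δ) (reducedSolution L (S t) (bhat t) i) ((L⁻¹ *ᵥ b) i) :=
  h.eApprox_reducedSolution_of_output hL hb hδ ht (h.eApprox_output hL hb hδ hδ1 ht) i

/-- The constant is `4 / 3 * (1 / 2 + δ / 8)` with `δ ≤ 1 / 8`: the factor `4 / 3` bounds
`exp (1 / 4)`, the term `1 / 2` is the threshold and `δ / 8` the solver error. -/
theorem inv_mulVec_le_of_lt_threshold (h : IsThresholdDecayRun L b N δ T S xhat bhat xtil θ)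
    (hL : IsMMatrix L) (hb : 0 ≤ b) (hδ : 0 ≤ δ) (hδT : 2 * T * δ ≤ 1 / 4) (ht : t < T) {i : S t}
    (hi : xhat t i < θ t) :
    (L⁻¹ *ᵥ b) i ≤ 11 / 16 * ((∑ j ∈ S t, |bhat t j|) / N ^ 2) := by
  have htT : (t : ℝ) + 1 ≤ T := mod_cast ht
  have hδ8 : δ ≤ 1 / 8 := by nlinarith [t.cast_nonneg (α := ℝ)]
  set q := (∑ j ∈ S t, |bhat t j|) / N ^ 2 with hq
  have hq_nonneg : 0 ≤ q := div_nonneg (h.sum_abs_rhs_pos ht).le (sq_nonneg N)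
  have hsol := h.eApprox_reducedSolution hL hb hδ (by linarith) ht.le i
  have hthreshold : θ t ≤ 1 / 2 * q :=
    (h.threshold_mem t ht).2.trans_eq (by rw [hq]; ring)
  have herror : -(δ / 8 * q) ≤ xhat t i - reducedSolution L (S t) (bhat t) i := by
    refine (abs_le.1 ((h.abs_sub_solution_le t ht i).trans_eq ?_)).1
    rw [hq]
    ring
  calc (L⁻¹ *ᵥ b) i ≤ 4 / 3 * reducedSolution L (S t) (bhat t) i :=
        hsol.le_four_thirds_mul (hsol.nonneg_left (hL.inv_mulVec_nonneg hb i)) (by nlinarith)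
    _ ≤ 4 / 3 * ((1 / 2 + δ / 8) * q) := by linarith
    _ ≤ 4 / 3 * ((1 / 2 + 1 / 8 / 8) * q) := by
      linarith [mul_le_mul_of_nonneg_right hδ8 hq_nonneg]
    _ = 11 / 16 * q := by ring

theorem sum_abs_rhs_le (h : IsThresholdDecayRun L b N δ T S xhat bhat xtil θ)
    (hL : IsMMatrix L) (hN : L.trace ≤ N) (hb : 0 ≤ b) (hδ : 0 ≤ δ) (hδT : 2 * T * δ ≤ 1 / 4)
    (ht : t < T) {m : ℝ} (hm : 0 ≤ m) (hxm : ∀ i ∈ S t, (L⁻¹ *ᵥ b) i ≤ m) :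
    ∑ i ∈ S t, |bhat t i| ≤ 4 / 3 * (N * m) := by
  have htT : (t : ℝ) + 1 ≤ T := mod_cast ht
  have hx := hL.inv_mulVec_nonneg hb
  have hrhs_nonneg := hL.principalSubmatrix_mulVec_nonneg hx
    (by rwa [mulVec_inv_mulVec_of_isUnit hL.isUnit]) (S t)
  have hterm (i : S t) :
      |bhat t i| ≤ 4 / 3 * (principalSubmatrix L (S t) *ᵥ fun j => (L⁻¹ *ᵥ b) j) i := by
    have happrox := h.eApprox_rhs hL hb hδ (by nlinarith [t.cast_nonneg (α := ℝ)]) ht.le i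
    rw [abs_of_nonneg (happrox.nonneg_left (hrhs_nonneg i))]
    exact happrox.symm.le_four_thirds_mul (hrhs_nonneg i) (by nlinarith)
  calc ∑ i ∈ S t, |bhat t i| = ∑ i : S t, |bhat t i| := (Finset.sum_coe_sort _ _).symm
    _ ≤ 4 / 3 * ∑ i, (principalSubmatrix L (S t) *ᵥ fun j => (L⁻¹ *ᵥ b) j) i := by
      rw [Finset.mul_sum]
      exact Finset.sum_le_sum fun i _ => hterm i
    _ ≤ 4 / 3 * ((principalSubmatrix L (S t)).trace * m) := by
      gcongr
      exact (hL.principalSubmatrix _).isZMatrix.sum_mulVec_le_trace_mul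
        (fun i => (hL.diag_pos i).le) (fun i => hx i) fun i => hxm i i.2
    _ ≤ 4 / 3 * (N * m) := by
      gcongr
      exact (hL.trace_principalSubmatrix_le _).trans hN

/-- Used with `r = t + 1` for the decay of the right-hand sides, and with `r = t` to show that a
round which extracts nothing is impossible. -/
theorem sum_abs_rhs_le_of_subset (h : IsThresholdDecayRun L b N δ T S xhat bhat xtil θ)
    (hL : IsMMatrix L) (hN0 : 0 < N) (hN : L.trace ≤ N) (hb : 0 ≤ b) (hδ : 0 ≤ δ)
    (hδT : 2 * T * δ ≤ 1 / 4) {r : ℕ} (hr : r < T) (ht : t < T) (hrt : S r ⊆ S (t + 1)) :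
    ∑ i ∈ S r, |bhat r i| ≤ 11 / 12 * ((∑ i ∈ S t, |bhat t i|) / N) := by
  have hsmall : ∀ i ∈ S r, (L⁻¹ *ᵥ b) i ≤ 11 / 16 * ((∑ j ∈ S t, |bhat t j|) / N ^ 2) := by
    intro i hi
    obtain ⟨hit, hlt⟩ := (h.mem_support_succ t ht i).1 (hrt hi)
    exact h.inv_mulVec_le_of_lt_threshold hL hb hδ hδT ht (i := ⟨i, hit⟩) hlt
  refine (h.sum_abs_rhs_le hL hN hb hδ hδT hr ?_ hsmall).trans_eq ?_
  · have := h.sum_abs_rhs_pos ht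
    positivity
  · field_simp
    ring

theorem sum_abs_rhs_le_div_pow (h : IsThresholdDecayRun L b N δ T S xhat bhat xtil θ)
    (hL : IsMMatrix L) (hN0 : 0 < N) (hN : L.trace ≤ N) (hb : 0 ≤ b) (hδ : 0 ≤ δ)
    (hδT : 2 * T * δ ≤ 1 / 4) (ht : t < T) :
    ∑ i ∈ S t, |bhat t i| ≤ (∑ i, |b i|) / N ^ t := by
  induction t with
  | zero => simp [h.support_zero, h.rhs_zero]
  | succ t ih =>
    have ht' : t < T := t.lt_succ_self.trans ht
    have hpos := h.sum_abs_rhs_pos ht'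
    calc ∑ i ∈ S (t + 1), |bhat (t + 1) i|
        ≤ 11 / 12 * ((∑ i ∈ S t, |bhat t i|) / N) :=
          h.sum_abs_rhs_le_of_subset hL hN0 hN hb hδ hδT ht ht' subset_rfl
      _ ≤ (∑ i ∈ S t, |bhat t i|) / N := mul_le_of_le_one_left (by positivity) (by norm_num)
      _ ≤ (∑ i, |b i|) / N ^ t / N := by
        gcongr
        exact ih ht'
      _ = (∑ i, |b i|) / N ^ (t + 1) := by rw [div_div, pow_succ]

theorem inv_mulVec_lt_of_mem_support_final
    (h : IsThresholdDecayRun L b N δ T S xhat bhat xtil θ) (hL : IsMMatrix L) (hN0 : 0 < N)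
    (hN : L.trace ≤ N) (hb : 0 ≤ b) (hδ : 0 ≤ δ) (hδT : 2 * T * δ ≤ 1 / 4) (hT : 1 ≤ T) {i : ι}
    (hi : i ∈ S T) : (L⁻¹ *ᵥ b) i < (N ^ (T + 1))⁻¹ * ∑ k, |b k| := by
  obtain ⟨t, rfl⟩ := Nat.exists_eq_add_of_le' hT
  obtain ⟨hit, hlt⟩ := (h.mem_support_succ t t.lt_succ_self i).1 hi
  have hpos := h.sum_abs_rhs_pos t.lt_succ_self
  calc (L⁻¹ *ᵥ b) i
      ≤ 11 / 16 * ((∑ j ∈ S t, |bhat t j|) / N ^ 2) :=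
        h.inv_mulVec_le_of_lt_threshold hL hb hδ hδT t.lt_succ_self (i := ⟨i, hit⟩) hlt
    _ < (∑ j ∈ S t, |bhat t j|) / N ^ 2 := mul_lt_of_lt_one_left (by positivity) (by norm_num)
    _ ≤ (∑ k, |b k|) / N ^ t / N ^ 2 := by
      gcongr
      exact h.sum_abs_rhs_le_div_pow hL hN0 hN hb hδ hδT t.lt_succ_self
    _ = (N ^ (t + 1 + 1))⁻¹ * ∑ k, |b k| := by rw [div_div, ← pow_add, div_eq_inv_mul]

theorem support_succ_ssubset (h : IsThresholdDecayRun L b N δ T S xhat bhat xtil θ)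
    (hL : IsMMatrix L) (hN1 : 1 ≤ N) (hN : L.trace ≤ N) (hb : 0 ≤ b) (hδ : 0 ≤ δ)
    (hδT : 2 * T * δ ≤ 1 / 4) (ht : t < T) : S (t + 1) ⊂ S t := by
  refine ⟨fun i hi => ((h.mem_support_succ t ht i).1 hi).1, fun hsub => ?_⟩
  have hpos := h.sum_abs_rhs_pos ht
  have hle := h.sum_abs_rhs_le_of_subset hL (one_pos.trans_le hN1) hN hb hδ hδT ht ht hsub
  linarith [div_le_self hpos.le hN1]

theorem card_support_add_le (h : IsThresholdDecayRun L b N δ T S xhat bhat xtil θ)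
    (hL : IsMMatrix L) (hN1 : 1 ≤ N) (hN : L.trace ≤ N) (hb : 0 ≤ b) (hδ : 0 ≤ δ)
    (hδT : 2 * T * δ ≤ 1 / 4) (ht : t ≤ T) : (S t).card + t ≤ Fintype.card ι := by
  induction t with
  | zero => exact (S 0).card_le_univ
  | succ t ih =>
    have hlt := Finset.card_lt_card (h.support_succ_ssubset hL hN1 hN hb hδ hδT ht)
    have := ih (Nat.le_of_succ_le ht)
    lia

end IsThresholdDecayRun

end Run

theorem thresholdDecay_correctness_general {ι : Type*} [Fintype ι] [DecidableEq ι]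
    {L : Matrix ι ι ℝ} {b : ι → ℝ} {N δ ε : ℝ} {T : ℕ} {S : ℕ → Finset ι}
    {xhat bhat xtil : ℕ → ι → ℝ} {θ : ℕ → ℝ}
    (hrun : IsThresholdDecayRun L b N δ T S xhat bhat xtil θ) (hL : IsMMatrix L) (hb : 0 ≤ b)
    (hN1 : 1 ≤ N) (hN : L.trace ≤ N) (hT : 1 ≤ T) (hδ : 0 ≤ δ) (hδT : 2 * T * δ ≤ 1 / 4)
    (hε : 2 * T * δ ≤ ε) :
    (∀ i, (N ^ (T + 1))⁻¹ * ∑ k, |b k| ≤ (L⁻¹ *ᵥ b) i → i ∉ S T) ∧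
    (∀ i, i ∉ S T → EApprox ε (xtil T i) ((L⁻¹ *ᵥ b) i)) ∧
    (Fintype.card ι ≤ T → S T = ∅) := by
  refine ⟨fun i hi hiS => ?_, fun i hi => ?_, fun hcard => ?_⟩
  · exact hi.not_gt <| hrun.inv_mulVec_lt_of_mem_support_final hL (one_pos.trans_le hN1) hN hb hδ
      hδT hT hiS
  · have hT' : (1 : ℝ) ≤ T := mod_cast hT
    have happrox := hrun.eApprox_output hL hb hδ (by nlinarith) le_rfl i hi
    exact happrox.mono (happrox.nonneg_left (hL.inv_mulVec_nonneg hb i)) hε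
  · have := hrun.card_support_add_le hL hN1 hN hb hδ hδT le_rfl
    exact Finset.card_eq_zero.1 (by lia)

open Classical in
/-- Correctness of the Threshold Decay framework. -/
theorem thresholdDecay_correctness {n : ℕ} (T U : ℕ) (hT : 10 ≤ T) (hU : 2 ≤ U)
    (ε : ℝ) (hε0 : 0 < ε) (hε1 : ε < 1)
    (L : Matrix (Fin n) (Fin n) ℝ) (hL : IsRDDL L) (hInv : IsUnit L)
    (hLint : ∀ i j, ∃ z : ℤ, L i j = (z : ℝ) ∧ |z| ≤ (U : ℤ))
    (b : Fin n → ℝ) (hbint : ∀ i, ∃ z : ℤ, b i = (z : ℝ) ∧ 0 ≤ z ∧ z ≤ (U : ℤ))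
    (εL : ℝ) (hεL : εL = ε / (64 * T * ((n : ℝ) * U) ^ 2))
    (S : ℕ → Finset (Fin n))
    (xhat bhat xtil : ℕ → Fin n → ℝ)
    (θ : ℕ → ℝ)
    (hS0 : S 0 = Finset.univ)
    (hbhat0 : bhat 0 = b)
    (hbhat_nonneg : ∀ t ≤ T, ∀ i ∈ S t, 0 ≤ bhat t i)
    -- (i) `x̂⁽ᵗ⁾` is a normwise `ε_L`-approximate solution of the reduced system
    (hsolve : ∀ t < T,
      Real.sqrt (∑ i : {i // i ∈ S t},
          (xhat t i.val -
            ((submatrixOn L (S t) (S t))⁻¹ *ᵥ fun j : {j // j ∈ S t} => bhat t j.val) i) ^ 2)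
        ≤ εL * Real.sqrt (∑ i ∈ S t, (bhat t i) ^ 2))
    -- (ii) `θ t` is the smallest power of two strictly larger than `‖b̂⁽ᵗ⁾‖₁ / (4(nU)²)`
    (hθ : ∀ t < T, ∃ z : ℤ, θ t = (2 : ℝ) ^ z ∧
      (∑ i ∈ S t, |bhat t i|) / (4 * ((n : ℝ) * U) ^ 2) < (2 : ℝ) ^ z ∧
      (2 : ℝ) ^ (z - 1) ≤ (∑ i ∈ S t, |bhat t i|) / (4 * ((n : ℝ) * U) ^ 2))
    -- (iii) `F⁽ᵗ⁾ = {i ∈ S⁽ᵗ⁾ : x̂⁽ᵗ⁾ᵢ ≥ θ t}` and `S⁽ᵗ⁺¹⁾ = S⁽ᵗ⁾ \ F⁽ᵗ⁾`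
    (hSsucc : ∀ t < T, S (t + 1) = S t \ ((S t).filter fun i => θ t ≤ xhat t i))
    -- (iv) `x̃⁽ᵗ⁺¹⁾` agrees with `x̃⁽ᵗ⁾` on `[n] \ S⁽ᵗ⁾` and with `x̂⁽ᵗ⁾` on `F⁽ᵗ⁾`
    (hxtil_old : ∀ t < T, ∀ i, i ∉ S t → xtil (t + 1) i = xtil t i)
    (hxtil_new : ∀ t < T, ∀ i ∈ S t, θ t ≤ xhat t i → xtil (t + 1) i = xhat t i)
    -- (v) `b̂⁽ᵗ⁺¹⁾ ≈_{ε/(8T)} b_{S⁽ᵗ⁺¹⁾} − L_{S⁽ᵗ⁺¹⁾, [n]∖S⁽ᵗ⁺¹⁾} x̃⁽ᵗ⁺¹⁾`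
    (hbhat_succ : ∀ t < T, ∀ i ∈ S (t + 1),
      EApprox (ε / (8 * T)) (bhat (t + 1) i)
        (b i - ∑ j ∈ (S (t + 1))ᶜ, L i j * xtil (t + 1) j)) :
    -- (a) all large entries of the exact solution have been extracted
    (∀ i, (((n : ℝ) * U) ^ (T + 1))⁻¹ * (∑ k, |b k|) ≤ (L⁻¹ *ᵥ b) i → i ∉ S T) ∧
    -- (b) the output is an entrywise `e^ε`-approximation on `A = [n] \ S⁽ᵀ⁾`
    (∀ i, i ∉ S T → EApprox ε (xtil T i) ((L⁻¹ *ᵥ b) i)) ∧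
    -- (c) if `T = n` then the output approximates the whole solution
    (T = n →
      (∀ i ∈ S T, (L⁻¹ *ᵥ b) i = 0) ∧
      ∀ i, EApprox ε (if i ∈ S T then 0 else xtil T i) ((L⁻¹ *ᵥ b) i)) := by
  obtain rfl | hn := n.eq_zero_or_pos
  · simp
  have hrun : IsThresholdDecayRun L b (n * U) (ε / (8 * T)) T S xhat bhat xtil θ :=
    { support_zero := hS0
      rhs_zero := hbhat0
      abs_sub_solution_le := fun t ht i => by
        have hεL' : εL = ε / (8 * T) / (8 * (n * U) ^ 2) := by rw [hεL]; ring
        exact hεL' ▸ abs_le_mul_sum_abs_of_sqrt_sum_sq_le (by rw [hεL]; positivity) (hsolve t ht) i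
      threshold_mem := fun t ht => by
        obtain ⟨z, hz, hlow, hupp⟩ := hθ t ht
        exact hz ▸ ⟨hlow, (two_zpow_le_two_mul hupp).trans_eq (by ring)⟩
      mem_support_succ := fun t ht i => by grind
      output_of_notMem := hxtil_old
      output_of_threshold_le := hxtil_new
      rhs_succ := hbhat_succ }
  have hb : 0 ≤ b := fun i => by obtain ⟨z, hz, hz0, -⟩ := hbint i; simpa [hz] using hz0
  have hdiag (i : Fin n) : L i i ≤ U := by
    obtain ⟨z, hz, hzU⟩ := hLint i i
    exact hz ▸ mod_cast (le_abs_self z).trans hzU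
  have hδT : 2 * T * (ε / (8 * T)) = ε / 4 := by field_simp; norm_num
  obtain ⟨hlarge, happrox, hempty⟩ := thresholdDecay_correctness_general (ε := ε) hrun
    (hL.isMMatrix hInv) hb (mod_cast by nlinarith)
    (by simpa using trace_le_card_mul hdiag) (by lia) (by positivity) (by linarith) (by linarith)
  exact ⟨hlarge, happrox, fun hTn => by simpa [hempty (by simp [hTn])] using happrox⟩
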